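/- Every finitely generated centrally nilpotent brace is supersoluble. -/

import Mathlib

/-- A (skew left) brace: a set with an additive group structure (not necessarily abelian)
and a multiplicative group structure sharing the same identity, satisfying the skew
distributive law `a * (b + c) = a * b + -a + a * c`. -/
class SkewBrace (B : Type*) extends AddGroup B, Group B where
  one_eq_zero : (1 : B) = (0 : B)
  skew_distrib : ∀ a b c : B, a * (b + c) = a * b + -a + a * c

/-- A group is supersoluble if it has a finite chain of normal subgroups with all
factors cyclic. -/
def Group.IsSupersoluble (G : Type*) [Group G] : Prop :=
  ∃ (n : ℕ) (H : ℕ → Subgroup G),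
    H 0 = ⊥ ∧ H n = ⊤ ∧ (∀ i, (H i).Normal) ∧ (∀ i, i < n → H i ≤ H (i + 1)) ∧
    ∀ i, i < n → ∃ x ∈ H (i + 1), ∀ y ∈ H (i + 1), ∃ k : ℤ, (x ^ k)⁻¹ * y ∈ H i

namespace SkewBrace

variable {B : Type*} [SkewBrace B]

/-- `lam a b = -a + a * b`, i.e. `λ_a(b)`. -/
def lam (a b : B) : B := -a + a * b

/-- the star operation `a ∗ b = λ_a(b) - b`. -/
def starOp (a b : B) : B := lam a b + -b

/-- the additive commutator `[a,b]_+`. -/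
def addCommutator (a b : B) : B := -a + -b + a + b

/-- A subbrace of `B`: a subset that is a subgroup of both `(B,+)` and `(B,·)`. -/
structure Subbrace (B : Type*) [SkewBrace B] where
  carrier : Set B
  zero_mem : (0 : B) ∈ carrier
  add_mem : ∀ {a b : B}, a ∈ carrier → b ∈ carrier → a + b ∈ carrier
  neg_mem : ∀ {a : B}, a ∈ carrier → -a ∈ carrier
  mul_mem : ∀ {a b : B}, a ∈ carrier → b ∈ carrier → a * b ∈ carrier
  inv_mem : ∀ {a : B}, a ∈ carrier → a⁻¹ ∈ carrier

/-- An ideal of `B`: a subbrace that is normal in `(B,+)` and in `(B,·)` and is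
invariant under all the maps `λ_b`. -/
structure BraceIdeal (B : Type*) [SkewBrace B] extends Subbrace B where
  addConj_mem : ∀ (b : B) {a : B}, a ∈ carrier → b + a + -b ∈ carrier
  mulConj_mem : ∀ (b : B) {a : B}, a ∈ carrier → b * a * b⁻¹ ∈ carrier
  lam_mem : ∀ (b : B) {a : B}, a ∈ carrier → lam b a ∈ carrier

/-- The additive subgroup underlying a subbrace. -/
def Subbrace.addSubgroup (S : Subbrace B) : AddSubgroup B where
  carrier := S.carrier
  zero_mem' := S.zero_mem
  add_mem' := S.add_mem
  neg_mem' := S.neg_mem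

/-- The multiplicative subgroup underlying a subbrace. -/
def Subbrace.subgroup (S : Subbrace B) : Subgroup B where
  carrier := S.carrier
  one_mem' := by rw [one_eq_zero]; exact S.zero_mem
  mul_mem' := S.mul_mem
  inv_mem' := S.inv_mem

/-- Given ideals `J ≤ I` of `B`, `MemSocQuotRel I J x` says that the coset of `x`
lies in `Soc(I/J) = Ker(λ) ∩ Z(I/J, +)` (for `I = B` take `I = Set.univ`). -/
def MemSocQuotRel (I J : Set B) (x : B) : Prop :=
  x ∈ I ∧ (∀ y ∈ I, -y + lam x y ∈ J) ∧ ∀ y ∈ I, -(y + x) + (x + y) ∈ J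

/-- Given ideals `J ≤ I` of `B`, `MemZetaQuotRel I J x` says that the coset of `x`
lies in `ζ(I/J) = Soc(I/J) ∩ Z(I/J, ·)`. -/
def MemZetaQuotRel (I J : Set B) (x : B) : Prop :=
  MemSocQuotRel I J x ∧ ∀ y ∈ I, (y * x)⁻¹ * (x * y) ∈ J

/-- The coset of `x` lies in `Soc(B/J)`. -/
def MemSocQuot (J : Set B) (x : B) : Prop := MemSocQuotRel Set.univ J x

/-- The coset of `x` lies in `ζ(B/J)`. -/
def MemZetaQuot (J : Set B) (x : B) : Prop := MemZetaQuotRel Set.univ J x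

/-- For ideals `I ≤ J`, the additive group of the quotient `J/I` is infinite cyclic. -/
def QuotAddInfCyclic (I J : Set B) : Prop :=
  ∃ x ∈ J, (∀ y ∈ J, ∃ n : ℤ, -(n • x) + y ∈ I) ∧ ∀ n : ℤ, n • x ∈ I → n = 0

/-- For ideals `I ≤ J`, the quotient `J/I` has prime order `p`. -/
def QuotPrimeOrder (I J : Set B) (p : ℕ) : Prop :=
  p.Prime ∧ ∃ x ∈ J, x ∉ I ∧ p • x ∈ I ∧ ∀ y ∈ J, ∃ n : ℤ, -(n • x) + y ∈ I

/-- A brace is supersoluble if it has a finite chain of ideals each factor of which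
either is additively infinite cyclic and contained in the socle of the corresponding
quotient, or has prime order. -/
def IsSupersoluble (B : Type*) [SkewBrace B] : Prop :=
  ∃ (n : ℕ) (I : ℕ → BraceIdeal B),
    (I 0).carrier = {0} ∧ (I n).carrier = Set.univ ∧
    (∀ i, i < n → (I i).carrier ⊆ (I (i + 1)).carrier) ∧
    ∀ i, i < n →
      (QuotAddInfCyclic (I i).carrier (I (i + 1)).carrier ∧
        ∀ x ∈ (I (i + 1)).carrier, MemSocQuot (I i).carrier x) ∨
      ∃ p : ℕ, QuotPrimeOrder (I i).carrier (I (i + 1)).carrier p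

/-- The upper socle series of the brace (carrier of the ideal) `I`. -/
def socChainRel (I : Set B) : ℕ → Set B
  | 0 => {0}
  | n + 1 => {x | MemSocQuotRel I (socChainRel I n) x}

/-- The upper central series of the brace (carrier of the ideal) `I`. -/
def zetaChainRel (I : Set B) : ℕ → Set B
  | 0 => {0}
  | n + 1 => {x | MemZetaQuotRel I (zetaChainRel I n) x}

/-- The upper socle series `Soc_n(B)` of `B`. -/
def socChain (B : Type*) [SkewBrace B] : ℕ → Set B := socChainRel Set.univ

/-- The upper central series `ζ_n(B)` of `B`. -/
def zetaChain (B : Type*) [SkewBrace B] : ℕ → Set B := zetaChainRel Set.univ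

/-- A brace is centrally nilpotent if its upper central series reaches `B`. -/
def IsCentrallyNilpotent (B : Type*) [SkewBrace B] : Prop :=
  ∃ m : ℕ, zetaChain B m = Set.univ

end SkewBrace

namespace SkewBrace

/-- A brace is finitely generated if there is a finite subset contained in no proper
subbrace (i.e. generating `B` as a brace). -/
def IsFinitelyGenerated (B : Type*) [SkewBrace B] : Prop :=
  ∃ S : Finset B, ∀ C : Subbrace B, ↑S ⊆ C.carrier → C.carrier = Set.univ

/-! The lower central series of a brace is built from three kinds of commutators of an element `x`
of a term with an arbitrary `b`: `[x, b]_+` and the differences `λ_b(x) - x` and `λ_x(b) - b`.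
Modulo the next term, each of these is a homomorphism in each variable, except that `λ_b(x) - x`
is one in `b` only for the multiplication. So, if `B` is finitely generated, induction along the
series shows that every factor is finitely generated, as long as one also carries along finite sets
that generate the quotients of `B` both additively and multiplicatively. In the centrally nilpotent
case the series reaches `0`, its factors are central, and adjoining their finitely many generators
one at a time gives cyclic factors, the finite ones of which split into factors of prime order. -/

section Lambda

variable {B : Type*} [SkewBrace B]

theorem mul_eq_add_lam (a b : B) : a * b = a + lam a b := by
  simp only [lam, add_neg_cancel_left]

theorem lam_add (a b c : B) : lam a (b + c) = lam a b + lam a c := by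
  simp only [lam, skew_distrib, add_assoc]

/-- The additive endomorphism `λ_a` of a brace. -/
def lamHom (a : B) : B →+ B := AddMonoidHom.mk' (lam a) (lam_add a)

theorem lam_zero (a : B) : lam a 0 = 0 := map_zero (lamHom a)

theorem lam_neg (a b : B) : lam a (-b) = -lam a b := map_neg (lamHom a) b

theorem one_lam (b : B) : lam 1 b = b := by
  rw [lam, one_mul, one_eq_zero, neg_zero, zero_add]

theorem zero_lam (b : B) : lam 0 b = b := by
  rw [← one_eq_zero, one_lam]

theorem mul_lam (a b c : B) : lam (a * b) c = lam a (lam b c) := by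
  have h : a + lam a b + lam (a * b) c = a + lam a b + lam a (lam b c) := by
    rw [← mul_eq_add_lam a b, ← mul_eq_add_lam, mul_assoc, mul_eq_add_lam b c, mul_eq_add_lam a,
      lam_add, ← add_assoc, ← mul_eq_add_lam]
  exact add_left_cancel h

theorem inv_lam_lam (a b : B) : lam a⁻¹ (lam a b) = b := by
  rw [← mul_lam, inv_mul_cancel, one_lam]

theorem lam_inv_lam (a b : B) : lam a (lam a⁻¹ b) = b := by
  rw [← mul_lam, mul_inv_cancel, one_lam]

theorem add_eq_mul_lam (a b : B) : a + b = a * lam a⁻¹ b := by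
  rw [mul_eq_add_lam, lam_inv_lam]

theorem lam_inv_mul (a b : B) : lam a (a⁻¹ * b) = -a + b := by
  rw [lam, mul_inv_cancel_left]

theorem inv_eq_neg_lam (a : B) : a⁻¹ = -lam a⁻¹ a := by
  rw [eq_neg_iff_add_eq_zero, ← mul_eq_add_lam, inv_mul_cancel, one_eq_zero]

end Lambda

section Ideals

variable {B : Type*} [SkewBrace B]

/-- The additive subgroup `A` is the carrier of an ideal; being closed under multiplication and
normal in the multiplicative group is a consequence, see `IsBraceIdeal.toBraceIdeal`. -/
class IsBraceIdeal (A : AddSubgroup B) : Prop extends A.Normal where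
  lam_mem : ∀ (b : B) {a : B}, a ∈ A → lam b a ∈ A
  neg_add_lam_mem : ∀ {a : B}, a ∈ A → ∀ b : B, -b + lam a b ∈ A

/-- The ideal of the brace with a given underlying additive subgroup. -/
def IsBraceIdeal.toBraceIdeal (A : AddSubgroup B) [IsBraceIdeal A] : BraceIdeal B where
  carrier := A
  zero_mem := A.zero_mem
  add_mem := A.add_mem
  neg_mem := A.neg_mem
  mul_mem {a b} ha hb := by
    rw [mul_eq_add_lam]
    exact A.add_mem ha (lam_mem a hb)
  inv_mem {a} ha := by
    rw [inv_eq_neg_lam]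
    exact A.neg_mem (lam_mem a⁻¹ ha)
  addConj_mem b a ha := AddSubgroup.Normal.conj_mem inferInstance a ha b
  mulConj_mem b a ha := by
    have hconj : -b⁻¹ + a + b⁻¹ ∈ A := by
      simpa only [neg_neg] using AddSubgroup.Normal.conj_mem inferInstance a ha (-b⁻¹)
    have h : -b⁻¹ + a * b⁻¹ ∈ A := by
      rw [mul_eq_add_lam, ← add_neg_cancel_left b⁻¹ (lam a b⁻¹), ← add_assoc, ← add_assoc]
      exact A.add_mem hconj (neg_add_lam_mem ha b⁻¹)
    rw [← lam_inv_mul, inv_inv, ← mul_assoc] at h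
    simpa only [lam_inv_lam, inv_lam_lam, SetLike.mem_coe] using lam_mem b h
  lam_mem b _ ha := lam_mem b ha

instance : IsBraceIdeal (⊥ : AddSubgroup B) where
  lam_mem b a ha := by
    rw [AddSubgroup.mem_bot] at ha ⊢
    rw [ha, lam_zero]
  neg_add_lam_mem {a} ha b := by
    rw [AddSubgroup.mem_bot] at ha ⊢
    rw [ha, zero_lam, neg_add_cancel]

variable {A : AddSubgroup B} [IsBraceIdeal A]

theorem mk_lam_congr_right (a : B) {b c : B} (h : (b : B ⧸ A) = c) :
    (↑(lam a b) : B ⧸ A) = ↑(lam a c) := by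
  rw [QuotientAddGroup.eq] at h ⊢
  simpa only [lam_add, lam_neg] using IsBraceIdeal.lam_mem a h

theorem mk_lam_of_mem {a : B} (ha : a ∈ A) (b : B) : (↑(lam a b) : B ⧸ A) = b :=
  (QuotientAddGroup.eq.2 (IsBraceIdeal.neg_add_lam_mem ha b)).symm

theorem mk_lam_congr_left {a c : B} (h : (a : B ⧸ A) = c) (b : B) :
    (↑(lam a b) : B ⧸ A) = ↑(lam c b) := by
  have hd : lam a⁻¹ (-a + c) ∈ A := IsBraceIdeal.lam_mem _ (QuotientAddGroup.eq.1 h)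
  rw [← add_neg_cancel_left a c, add_eq_mul_lam a, mul_lam]
  exact (mk_lam_congr_right a (mk_lam_of_mem hd b)).symm

theorem inv_mul_mem_iff {a b : B} : a⁻¹ * b ∈ A ↔ (a : B ⧸ A) = b := by
  rw [QuotientAddGroup.eq, ← lam_inv_mul]
  refine ⟨IsBraceIdeal.lam_mem a, fun h => ?_⟩
  simpa only [inv_lam_lam] using IsBraceIdeal.lam_mem a⁻¹ h

theorem mem_of_mk_eq {H : Subgroup B} (hH : (A : Set B) ⊆ H) {a b : B} (h : (a : B ⧸ A) = b)
    (ha : a ∈ H) : b ∈ H := by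
  rw [← mul_inv_cancel_left a b]
  exact H.mul_mem ha (hH (inv_mul_mem_iff.2 h))

end Ideals

section Centre

variable {B : Type*} [SkewBrace B]

/-- The preimage in `B` of the centre `ζ(B/A)` of the quotient by an ideal `A`. Commuting with `b`
under multiplication is expressed by `λ_b` fixing the coset of `x`, see
`memZetaQuot_iff_mem_centreMod`. -/
def centreMod (A : AddSubgroup B) [IsBraceIdeal A] : AddSubgroup B where
  carrier := {x | ∀ b : B, (↑(lam b x) : B ⧸ A) = x ∧ (↑(lam x b) : B ⧸ A) = b ∧
    (↑(b + x) : B ⧸ A) = ↑(x + b)}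
  zero_mem' b := by simp only [lam_zero, zero_lam, add_zero, zero_add, and_self]
  add_mem' {x y} hx hy b := by
    refine ⟨?_, ?_, ?_⟩
    · rw [lam_add, QuotientAddGroup.mk_add, (hx b).1, (hy b).1, QuotientAddGroup.mk_add]
    · rw [add_eq_mul_lam, mul_lam, (hx _).2.1, mk_lam_congr_left (hy x⁻¹).1, (hy b).2.1]
    · have hxb : AddCommute (b : B ⧸ A) x := (hx b).2.2
      have hyb : AddCommute (b : B ⧸ A) y := (hy b).2.2
      exact hxb.add_right hyb
  neg_mem' {x} hx b := by
    refine ⟨?_, ?_, ?_⟩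
    · rw [lam_neg, QuotientAddGroup.mk_neg, (hx b).1, QuotientAddGroup.mk_neg]
    · have hinv : (↑(-x) : B ⧸ A) = ↑x⁻¹ := by
        rw [inv_eq_neg_lam, QuotientAddGroup.mk_neg, QuotientAddGroup.mk_neg, (hx x⁻¹).1]
      rw [mk_lam_congr_left hinv, ← mk_lam_congr_right x⁻¹ (hx b).2.1, inv_lam_lam]
    · have hxb : AddCommute (b : B ⧸ A) x := (hx b).2.2
      exact hxb.neg_right

theorem memSocQuot_of_mem_centreMod {A : AddSubgroup B} [IsBraceIdeal A] {x : B}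
    (hx : x ∈ centreMod A) : MemSocQuot (A : Set B) x :=
  ⟨trivial, fun b _ => QuotientAddGroup.eq.1 (hx b).2.1.symm,
    fun b _ => QuotientAddGroup.eq.1 (hx b).2.2⟩

theorem memZetaQuot_iff_mem_centreMod {A : AddSubgroup B} [IsBraceIdeal A] {x : B} :
    MemZetaQuot (A : Set B) x ↔ x ∈ centreMod A := by
  have mk_mul (a b : B) : (↑(a * b) : B ⧸ A) = a + ↑(lam a b) := by
    rw [mul_eq_add_lam, QuotientAddGroup.mk_add]
  constructor
  · rintro ⟨⟨-, hlam, hadd⟩, hmul⟩ b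
    have hxb : (↑(lam x b) : B ⧸ A) = b := (QuotientAddGroup.eq.2 (hlam b trivial)).symm
    have hcomm : (↑(b + x) : B ⧸ A) = ↑(x + b) := QuotientAddGroup.eq.2 (hadd b trivial)
    refine ⟨?_, hxb, hcomm⟩
    have h := inv_mul_mem_iff.1 (hmul b trivial)
    rw [mk_mul, mk_mul, hxb] at h
    exact add_left_cancel (h.trans hcomm.symm)
  · refine fun hx => ⟨memSocQuot_of_mem_centreMod hx, fun b _ => inv_mul_mem_iff.2 ?_⟩
    rw [mk_mul, mk_mul, (hx b).1, (hx b).2.1]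
    exact (hx b).2.2

theorem centreMod_mono {A A' : AddSubgroup B} [IsBraceIdeal A] [IsBraceIdeal A'] (h : A ≤ A') :
    centreMod A ≤ centreMod A' := by
  have mk_eq {a b : B} (hab : (a : B ⧸ A) = b) : (a : B ⧸ A') = b :=
    QuotientAddGroup.eq.2 (h (QuotientAddGroup.eq.1 hab))
  exact fun x hx b => ⟨mk_eq (hx b).1, mk_eq (hx b).2.1, mk_eq (hx b).2.2⟩

theorem le_centreMod (A : AddSubgroup B) [IsBraceIdeal A] : A ≤ centreMod A := by
  intro a ha b
  have ha0 : (a : B ⧸ A) = 0 := (QuotientAddGroup.eq_zero_iff a).2 ha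
  refine ⟨?_, mk_lam_of_mem ha b, ?_⟩
  · rw [ha0, QuotientAddGroup.eq_zero_iff]
    exact IsBraceIdeal.lam_mem b ha
  · rw [QuotientAddGroup.mk_add, QuotientAddGroup.mk_add, ha0, add_zero, zero_add]

end Centre

section Commutators

variable {B : Type*} [SkewBrace B]

/-- The elements whose vanishing expresses that every `x ∈ X` commutes, in the sense of braces,
with every `b ∈ Y`. -/
def braceCommutators (X Y : Set B) : Set B :=
  Set.image2 (fun x b => -lam b x + x) X Y ∪ Set.image2 (fun x b => -lam x b + b) X Y ∪
    Set.image2 (fun x b => -(b + x) + (x + b)) X Y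

theorem braceCommutators_finite {X Y : Set B} (hX : X.Finite) (hY : Y.Finite) :
    (braceCommutators X Y).Finite :=
  ((hX.image2 _ hY).union (hX.image2 _ hY)).union (hX.image2 _ hY)

theorem braceCommutators_subset {X X' Y Y' : Set B} (hX : X ⊆ X') (hY : Y ⊆ Y') :
    braceCommutators X Y ⊆ braceCommutators X' Y' :=
  Set.union_subset_union
    (Set.union_subset_union (Set.image2_subset hX hY) (Set.image2_subset hX hY))
    (Set.image2_subset hX hY)

theorem braceCommutators_subset_iff {A : AddSubgroup B} {X Y : Set B} :
    braceCommutators X Y ⊆ A ↔ ∀ x ∈ X, ∀ b ∈ Y, (↑(lam b x) : B ⧸ A) = x ∧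
      (↑(lam x b) : B ⧸ A) = b ∧ (↑(b + x) : B ⧸ A) = ↑(x + b) := by
  simp only [braceCommutators, Set.union_subset_iff, Set.image2_subset_iff, SetLike.mem_coe,
    ← QuotientAddGroup.eq]
  exact ⟨fun h x hx b hb => ⟨h.1.1 x hx b hb, h.1.2 x hx b hb, h.2 x hx b hb⟩,
    fun h => ⟨⟨fun x hx b hb => (h x hx b hb).1, fun x hx b hb => (h x hx b hb).2.1⟩,
      fun x hx b hb => (h x hx b hb).2.2⟩⟩

/-- The additive subgroup `[A, B]` generated by the commutators of `A` with the whole brace. -/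
def commutatorWithTop (A : AddSubgroup B) : AddSubgroup B :=
  AddSubgroup.closure (braceCommutators A Set.univ)

theorem commutatorWithTop_mono {A A' : AddSubgroup B} (h : A ≤ A') :
    commutatorWithTop A ≤ commutatorWithTop A' :=
  AddSubgroup.closure_mono (braceCommutators_subset h subset_rfl)

theorem commutatorWithTop_le_iff {A C : AddSubgroup B} [IsBraceIdeal C] :
    commutatorWithTop A ≤ C ↔ A ≤ centreMod C := by
  rw [commutatorWithTop, AddSubgroup.closure_le, braceCommutators_subset_iff]
  exact ⟨fun h x hx b => h x hx b trivial, fun h x hx b _ => h hx b⟩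

theorem isBraceIdeal_of_commutatorWithTop_le {A : AddSubgroup B} (h : commutatorWithTop A ≤ A) :
    IsBraceIdeal A := by
  rw [commutatorWithTop, AddSubgroup.closure_le, braceCommutators_subset_iff] at h
  refine { conj_mem := fun a ha b => ?_, lam_mem := fun b a ha => ?_,
           neg_add_lam_mem := fun {a} ha b => QuotientAddGroup.eq.1 (h a ha b trivial).2.1.symm }
  · have hcomm := QuotientAddGroup.eq.1 (h a ha (-b) trivial).2.2
    rw [neg_add_rev, neg_neg, add_assoc, AddSubgroup.add_mem_cancel_left _ (A.neg_mem ha),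
      ← add_assoc] at hcomm
    exact hcomm
  · have hlam := QuotientAddGroup.eq.1 (h a ha b trivial).1
    rwa [AddSubgroup.add_mem_cancel_right _ ha, AddSubgroup.neg_mem_iff] at hlam

theorem isBraceIdeal_of_commutatorWithTop_le_of_le {A C : AddSubgroup B}
    (hAC : commutatorWithTop A ≤ C) (hCA : C ≤ A) : IsBraceIdeal C :=
  isBraceIdeal_of_commutatorWithTop_le ((commutatorWithTop_mono hCA).trans hAC)

theorem isBraceIdeal_of_le_centreMod {A C : AddSubgroup B} [IsBraceIdeal A] (hAC : A ≤ C)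
    (hC : C ≤ centreMod A) : IsBraceIdeal C :=
  isBraceIdeal_of_commutatorWithTop_le ((commutatorWithTop_le_iff.2 hC).trans hAC)

instance (A : AddSubgroup B) [IsBraceIdeal A] : IsBraceIdeal (centreMod A) :=
  isBraceIdeal_of_le_centreMod (le_centreMod A) le_rfl

theorem commutatorWithTop_le (A : AddSubgroup B) [IsBraceIdeal A] : commutatorWithTop A ≤ A :=
  commutatorWithTop_le_iff.2 (le_centreMod A)

instance (A : AddSubgroup B) [IsBraceIdeal A] : IsBraceIdeal (commutatorWithTop A) :=
  isBraceIdeal_of_commutatorWithTop_le_of_le le_rfl (commutatorWithTop_le A)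

end Commutators

section LowerCentralSeries

variable (B : Type*) [SkewBrace B]

/-- The lower central series of a brace, starting with `B` in degree `0`. -/
def lowerCentralSeries : ℕ → AddSubgroup B
  | 0 => ⊤
  | n + 1 => commutatorWithTop (lowerCentralSeries n)

instance (n : ℕ) : IsBraceIdeal (lowerCentralSeries B n) := by
  induction n with
  | zero => exact isBraceIdeal_of_commutatorWithTop_le le_top
  | succ n ih => exact inferInstanceAs (IsBraceIdeal (commutatorWithTop _))

theorem exists_isBraceIdeal_coe_eq_zetaChain (n : ℕ) :
    ∃ Z : AddSubgroup B, IsBraceIdeal Z ∧ (Z : Set B) = zetaChain B n := by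
  induction n with
  | zero => exact ⟨⊥, inferInstance, AddSubgroup.coe_bot⟩
  | succ n ih =>
    obtain ⟨Z, hZ, hZn⟩ := ih
    refine ⟨centreMod Z, inferInstance, Set.ext fun x => ?_⟩
    change x ∈ centreMod Z ↔ MemZetaQuot (zetaChain B n) x
    rw [← hZn, memZetaQuot_iff_mem_centreMod]

variable {B}

theorem lowerCentralSeries_subset_zetaChain {i j : ℕ} (h : zetaChain B (i + j) = Set.univ) :
    (lowerCentralSeries B i : Set B) ⊆ zetaChain B j := by
  induction i generalizing j with
  | zero =>
    rw [← zero_add j, h]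
    exact Set.subset_univ _
  | succ i ih =>
    obtain ⟨Z, hZ, hZj⟩ := exists_isBraceIdeal_coe_eq_zetaChain B j
    rw [← hZj]
    refine commutatorWithTop_le_iff.2 fun x hx => memZetaQuot_iff_mem_centreMod.1 ?_
    rw [hZj]
    exact ih (j := j + 1) (by rwa [add_right_comm] at h) hx

theorem lowerCentralSeries_eq_bot {m : ℕ} (h : zetaChain B m = Set.univ) :
    lowerCentralSeries B m = ⊥ :=
  (AddSubgroup.eq_bot_iff_forall _).2 fun _ hx => lowerCentralSeries_subset_zetaChain (j := 0) h hx

end LowerCentralSeries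

section FiniteGeneration

variable {B : Type*} [SkewBrace B]

/-- `M` generates `B` modulo `A`, both as an additive and as a multiplicative group. -/
def GeneratesMod (M : Set B) (A : AddSubgroup B) : Prop :=
  AddSubgroup.closure (M ∪ A) = ⊤ ∧ Subgroup.closure (M ∪ A) = ⊤

theorem addSubgroup_closure_subset_subgroup_closure {A : AddSubgroup B} [IsBraceIdeal A]
    {X : Set B} (hX : X ⊆ centreMod A) :
    (AddSubgroup.closure (X ∪ A) : Set B) ⊆ Subgroup.closure (X ∪ A) := by
  have hA : (A : Set B) ⊆ Subgroup.closure (X ∪ A) :=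
    Set.subset_union_right.trans Subgroup.subset_closure
  have hcentral : AddSubgroup.closure (X ∪ A) ≤ centreMod A :=
    (AddSubgroup.closure_le _).2 (Set.union_subset hX (le_centreMod A))
  intro a ha
  induction ha using AddSubgroup.closure_induction with
  | mem a ha => exact Subgroup.subset_closure ha
  | zero => exact hA A.zero_mem
  | add a b _ hb iha ihb =>
    rw [add_eq_mul_lam]
    exact Subgroup.mul_mem _ iha (mem_of_mk_eq hA (hcentral hb a⁻¹).1.symm ihb)
  | neg a ha iha =>
    refine mem_of_mk_eq hA ?_ (Subgroup.inv_mem _ iha)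
    rw [inv_eq_neg_lam, QuotientAddGroup.mk_neg, (hcentral ha a⁻¹).1, QuotientAddGroup.mk_neg]

theorem GeneratesMod.union {A C : AddSubgroup B} [IsBraceIdeal C] {M X : Set B}
    (hM : GeneratesMod M A) (hX : AddSubgroup.closure (X ∪ C) = A) (hA : A ≤ centreMod C) :
    GeneratesMod (M ∪ X) C := by
  have hXA : X ⊆ A := hX ▸ Set.subset_union_left.trans AddSubgroup.subset_closure
  have hXC : X ∪ C ⊆ M ∪ X ∪ C := Set.union_subset_union_left _ Set.subset_union_right
  have hM' : M ⊆ M ∪ X ∪ C := Set.subset_union_left.trans Set.subset_union_left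
  constructor
  · rw [eq_top_iff, ← hM.1, AddSubgroup.closure_le]
    exact Set.union_subset (hM'.trans AddSubgroup.subset_closure)
      (hX ▸ AddSubgroup.closure_mono hXC)
  · rw [eq_top_iff, ← hM.2, Subgroup.closure_le]
    refine Set.union_subset (hM'.trans Subgroup.subset_closure) ?_
    rw [← hX]
    exact (addSubgroup_closure_subset_subgroup_closure (hXA.trans hA)).trans
      (Subgroup.closure_mono hXC)

theorem mem_centreMod_of_generatesMod {C D : AddSubgroup B} [IsBraceIdeal D] {M : Set B} {x : B}
    (hM : GeneratesMod M C) (hC : C ≤ centreMod D) (hx : braceCommutators {x} M ⊆ D) :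
    x ∈ centreMod D := by
  rw [braceCommutators_subset_iff] at hx
  have hx := hx x rfl
  have lam_fixes : ∀ b ∈ Subgroup.closure (M ∪ C), (↑(lam b x) : B ⧸ D) = x := by
    intro b hb
    induction hb using Subgroup.closure_induction with
    | mem b hb => exact hb.elim (fun hb => (hx b hb).1) fun hb => (hC hb x).2.1
    | one => rw [one_lam]
    | mul a b _ _ iha ihb => rw [mul_lam, mk_lam_congr_right a ihb, iha]
    | inv b _ ihb => rw [← mk_lam_congr_right b⁻¹ ihb, inv_lam_lam]
  have fixed_by_lam : AddSubgroup.closure (M ∪ C) ≤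
      ((QuotientAddGroup.mk' D).comp (lamHom x)).eqLocus (QuotientAddGroup.mk' D) :=
    (AddSubgroup.closure_le _).2
      (Set.union_subset (fun b hb => (hx b hb).2.1) fun b hb => (hC hb x).1)
  have add_commutes : AddSubgroup.closure (M ∪ C) ≤
      (AddSubgroup.centralizer {(x : B ⧸ D)}).comap (QuotientAddGroup.mk' D) := by
    rw [AddSubgroup.closure_le]
    refine Set.union_subset (fun b hb => ?_) fun b hb => ?_
    · exact AddSubgroup.mem_centralizer_singleton_iff.2 (hx b hb).2.2
    · exact AddSubgroup.mem_centralizer_singleton_iff.2 (hC hb x).2.2.symm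
  rw [hM.1] at fixed_by_lam add_commutes
  rw [hM.2] at lam_fixes
  exact fun b => ⟨lam_fixes b trivial, fixed_by_lam trivial,
    AddSubgroup.mem_centralizer_singleton_iff.1 (add_commutes (AddSubgroup.mem_top b))⟩

theorem closure_braceCommutators_union {A : AddSubgroup B} [IsBraceIdeal A] {X M : Set B}
    (hX : AddSubgroup.closure (X ∪ commutatorWithTop A) = A)
    (hM : GeneratesMod M (commutatorWithTop A)) :
    AddSubgroup.closure (braceCommutators X M ∪ commutatorWithTop (commutatorWithTop A)) =
      commutatorWithTop A := by
  set C := commutatorWithTop A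
  set D := AddSubgroup.closure (braceCommutators X M ∪ commutatorWithTop C)
  have hXA : X ⊆ A := hX ▸ Set.subset_union_left.trans AddSubgroup.subset_closure
  have hCD : commutatorWithTop C ≤ D := Set.subset_union_right.trans AddSubgroup.subset_closure
  have hDC : D ≤ C := (AddSubgroup.closure_le _).2 <| Set.union_subset
    ((braceCommutators_subset hXA (Set.subset_univ M)).trans AddSubgroup.subset_closure)
    (commutatorWithTop_le C)
  have : IsBraceIdeal D := isBraceIdeal_of_commutatorWithTop_le_of_le hCD hDC
  have hC : C ≤ centreMod D := commutatorWithTop_le_iff.1 hCD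
  have hXD : X ⊆ centreMod D := fun x hx => mem_centreMod_of_generatesMod hM hC <|
    (braceCommutators_subset (Set.singleton_subset_iff.2 hx) subset_rfl).trans <|
      Set.subset_union_left.trans AddSubgroup.subset_closure
  refine hDC.antisymm (commutatorWithTop_le_iff.2 ?_)
  rw [← hX, AddSubgroup.closure_le]
  exact Set.union_subset hXD hC

theorem IsFinitelyGenerated.exists_closure_union_lowerCentralSeries_one
    (h : IsFinitelyGenerated B) :
    ∃ X : Set B, X.Finite ∧ AddSubgroup.closure (X ∪ lowerCentralSeries B 1) = ⊤ := by
  obtain ⟨S, hS⟩ := h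
  refine ⟨S, S.finite_toSet, ?_⟩
  set C := AddSubgroup.closure (S ∪ lowerCentralSeries B 1 : Set B)
  have : IsBraceIdeal C := isBraceIdeal_of_commutatorWithTop_le_of_le (A := ⊤)
    (Set.subset_union_right.trans AddSubgroup.subset_closure) le_top
  have hC : (C : Set B) = Set.univ := hS (IsBraceIdeal.toBraceIdeal C).toSubbrace
    (Set.subset_union_left.trans AddSubgroup.subset_closure)
  exact AddSubgroup.coe_eq_univ.1 hC

theorem IsFinitelyGenerated.exists_finite_generators (h : IsFinitelyGenerated B) (n : ℕ) :
    (∃ X : Set B, X.Finite ∧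
      AddSubgroup.closure (X ∪ lowerCentralSeries B (n + 1)) = lowerCentralSeries B n) ∧
    ∃ M : Set B, M.Finite ∧ GeneratesMod M (lowerCentralSeries B (n + 1)) := by
  have central (n : ℕ) : lowerCentralSeries B n ≤ centreMod (lowerCentralSeries B (n + 1)) :=
    commutatorWithTop_le_iff.1 le_rfl
  induction n with
  | zero =>
    obtain ⟨X, hXfin, hX⟩ := h.exists_closure_union_lowerCentralSeries_one
    have htop : GeneratesMod ∅ (⊤ : AddSubgroup B) := by
      simp only [GeneratesMod, AddSubgroup.coe_top, Set.union_univ, AddSubgroup.closure_univ,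
        Subgroup.closure_univ, and_self]
    exact ⟨⟨X, hXfin, hX⟩, ∅ ∪ X, Set.finite_empty.union hXfin, htop.union hX (central 0)⟩
  | succ n ih =>
    obtain ⟨⟨X, hXfin, hX⟩, M, hMfin, hM⟩ := ih
    have hXM := closure_braceCommutators_union hX hM
    have hXMfin := braceCommutators_finite hXfin hMfin
    exact ⟨⟨_, hXMfin, hXM⟩, _, hMfin.union hXMfin, hM.union hXM (central (n + 1))⟩

end FiniteGeneration

section SupersolubleChains

variable {B : Type*} [SkewBrace B]

/-- `C` is an ideal that can follow `A` in a chain of ideals witnessing supersolubility. -/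
def SupersolubleStep (A C : AddSubgroup B) : Prop :=
  IsBraceIdeal C ∧ A ≤ C ∧
    ((QuotAddInfCyclic (A : Set B) C ∧ ∀ x ∈ C, MemSocQuot (A : Set B) x) ∨
      ∃ p : ℕ, QuotPrimeOrder (A : Set B) C p)

open Relation (ReflTransGen)

theorem mem_zmultiples_sup {G : Type*} [AddGroup G] (A : AddSubgroup G) (x : G) :
    x ∈ AddSubgroup.zmultiples x ⊔ A :=
  AddSubgroup.mem_sup_left (AddSubgroup.mem_zmultiples x)

theorem exists_neg_zsmul_add_mem {G : Type*} [AddGroup G] {A : AddSubgroup G} [A.Normal] {x y : G}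
    (hy : y ∈ AddSubgroup.zmultiples x ⊔ A) : ∃ n : ℤ, -(n • x) + y ∈ A := by
  obtain ⟨_, ⟨n, rfl⟩, a, ha, rfl⟩ := AddSubgroup.mem_sup_of_normal_right.1 hy
  exact ⟨n, by simpa only [neg_add_cancel_left] using ha⟩

section Cyclic

variable {A : AddSubgroup B} [IsBraceIdeal A] {x : B}

theorem zmultiples_sup_le_centreMod (hx : x ∈ centreMod A) :
    AddSubgroup.zmultiples x ⊔ A ≤ centreMod A :=
  sup_le (AddSubgroup.zmultiples_le_of_mem hx) (le_centreMod A)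

theorem isBraceIdeal_zmultiples_sup (hx : x ∈ centreMod A) :
    IsBraceIdeal (AddSubgroup.zmultiples x ⊔ A) :=
  isBraceIdeal_of_le_centreMod le_sup_right (zmultiples_sup_le_centreMod hx)

theorem supersolubleStep_of_not_isOfFinAddOrder (hx : x ∈ centreMod A)
    (h : ¬ IsOfFinAddOrder (x : B ⧸ A)) :
    SupersolubleStep A (AddSubgroup.zmultiples x ⊔ A) := by
  refine ⟨isBraceIdeal_zmultiples_sup hx, le_sup_right, Or.inl ⟨⟨x, mem_zmultiples_sup A x,
    fun y hy => exists_neg_zsmul_add_mem hy, fun n hn => ?_⟩,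
    fun y hy => memSocQuot_of_mem_centreMod (zmultiples_sup_le_centreMod hx hy)⟩⟩
  by_contra hn0
  exact h (isOfFinAddOrder_iff_zsmul_eq_zero.2
    ⟨n, hn0, (QuotientAddGroup.eq_zero_iff (n • x)).2 hn⟩)

theorem supersolubleChain_of_prime_nsmul_mem (hx : x ∈ centreMod A) {p : ℕ} (hp : p.Prime)
    (hpx : p • x ∈ A) : ReflTransGen SupersolubleStep A (AddSubgroup.zmultiples x ⊔ A) := by
  by_cases hxA : x ∈ A
  · rw [sup_eq_right.2 (AddSubgroup.zmultiples_le_of_mem hxA)]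
  · exact .single ⟨isBraceIdeal_zmultiples_sup hx, le_sup_right,
      Or.inr ⟨p, hp, x, mem_zmultiples_sup A x, hxA, hpx, fun y hy => exists_neg_zsmul_add_mem hy⟩⟩

theorem supersolubleChain_of_nsmul_mem (n : ℕ) (hn : n ≠ 0) (hx : x ∈ centreMod A)
    (hnx : n • x ∈ A) : ReflTransGen SupersolubleStep A (AddSubgroup.zmultiples x ⊔ A) := by
  induction n using induction_on_primes generalizing x with
  | zero => exact absurd rfl hn
  | one =>
    rw [one_nsmul] at hnx
    rw [sup_eq_right.2 (AddSubgroup.zmultiples_le_of_mem hnx)]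
  | prime_mul p k hp ih =>
    have hpx : p • x ∈ centreMod A := AddSubgroup.nsmul_mem _ hx p
    have := isBraceIdeal_zmultiples_sup hpx
    have hk := ih (right_ne_zero_of_mul hn) hpx (by rwa [← mul_nsmul])
    have hp := supersolubleChain_of_prime_nsmul_mem
      (centreMod_mono (le_sup_right : A ≤ AddSubgroup.zmultiples (p • x) ⊔ A) hx) hp
      (mem_zmultiples_sup A (p • x))
    rw [← sup_assoc, sup_eq_left.2 (AddSubgroup.zmultiples_le_of_mem
      (AddSubgroup.nsmul_mem_zmultiples x p))] at hp
    exact hk.trans hp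

theorem supersolubleChain_zmultiples_sup (hx : x ∈ centreMod A) :
    ReflTransGen SupersolubleStep A (AddSubgroup.zmultiples x ⊔ A) := by
  by_cases h : IsOfFinAddOrder (x : B ⧸ A)
  · obtain ⟨n, hn, hnx⟩ := isOfFinAddOrder_iff_nsmul_eq_zero.1 h
    exact supersolubleChain_of_nsmul_mem n hn.ne' hx ((QuotientAddGroup.eq_zero_iff (n • x)).1 hnx)
  · exact .single (supersolubleStep_of_not_isOfFinAddOrder hx h)

end Cyclic

theorem supersolubleChain_closure_union {A : AddSubgroup B} [IsBraceIdeal A] {X : Set B}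
    (hXfin : X.Finite) (hX : X ⊆ centreMod A) :
    ReflTransGen SupersolubleStep A (AddSubgroup.closure (X ∪ A)) := by
  induction X, hXfin using Set.Finite.induction_on with
  | empty => rw [Set.empty_union, AddSubgroup.closure_eq]
  | @insert x X _ _ ih =>
    obtain ⟨hx, hX⟩ := Set.insert_subset_iff.1 hX
    have hAC : A ≤ AddSubgroup.closure (X ∪ A) :=
      Set.subset_union_right.trans AddSubgroup.subset_closure
    have := isBraceIdeal_of_le_centreMod hAC
      ((AddSubgroup.closure_le _).2 (Set.union_subset hX (le_centreMod A)))
    have hstep := supersolubleChain_zmultiples_sup (centreMod_mono hAC hx)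
    rw [AddSubgroup.zmultiples_eq_closure, ← AddSubgroup.closure_union, ← Set.union_assoc,
      Set.singleton_union] at hstep
    exact (ih hX).trans hstep

theorem IsFinitelyGenerated.supersolubleChain_lowerCentralSeries (h : IsFinitelyGenerated B)
    (n : ℕ) : ReflTransGen SupersolubleStep (lowerCentralSeries B n) ⊤ := by
  induction n with
  | zero => exact .refl
  | succ n ih =>
    obtain ⟨⟨X, hXfin, hX⟩, -⟩ := h.exists_finite_generators n
    have hXn : X ⊆ lowerCentralSeries B n :=
      hX ▸ Set.subset_union_left.trans AddSubgroup.subset_closure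
    have hchain := supersolubleChain_closure_union hXfin
      (hXn.trans (commutatorWithTop_le_iff.1 (le_refl (lowerCentralSeries B (n + 1)))))
    rw [hX] at hchain
    exact hchain.trans ih

theorem exists_braceIdeal_chain {A C : AddSubgroup B} [IsBraceIdeal A]
    (h : ReflTransGen SupersolubleStep A C) :
    ∃ (n : ℕ) (I : ℕ → BraceIdeal B), (I 0).addSubgroup = A ∧ (I n).addSubgroup = C ∧
      ∀ i < n, SupersolubleStep (I i).addSubgroup (I (i + 1)).addSubgroup := by
  induction h with
  | refl => exact ⟨0, fun _ => IsBraceIdeal.toBraceIdeal A, rfl, rfl, fun _ hi => by omega⟩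
  | @tail C D _ hCD ih =>
    obtain ⟨n, I, hA, hC, hI⟩ := ih
    have := hCD.1
    refine ⟨n + 1, fun i => if i ≤ n then I i else IsBraceIdeal.toBraceIdeal D, ?_, ?_, ?_⟩
    · simpa only [zero_le, if_true] using hA
    · simp only [Nat.not_succ_le_self, if_false]
      rfl
    · intro i hi
      rcases Nat.lt_succ_iff_lt_or_eq.1 hi with hlt | rfl
      · simpa only [hlt.le, Nat.succ_le_of_lt hlt, if_true] using hI i hlt
      · simp only [le_refl, Nat.not_succ_le_self, if_true, if_false, hC]
        exact hCD

end SupersolubleChains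

/-- Every finitely generated centrally nilpotent brace is supersoluble. -/
theorem isSupersoluble_of_fg_centrallyNilpotent (B : Type*) [SkewBrace B]
    (hfg : IsFinitelyGenerated B) (hcn : IsCentrallyNilpotent B) :
    IsSupersoluble B := by
  obtain ⟨m, hm⟩ := hcn
  have hchain := hfg.supersolubleChain_lowerCentralSeries m
  rw [lowerCentralSeries_eq_bot hm] at hchain
  obtain ⟨n, I, hbot, htop, hI⟩ := exists_braceIdeal_chain hchain
  exact ⟨n, I, congrArg SetLike.coe hbot, congrArg SetLike.coe htop,
    fun i hi => (hI i hi).2.1, fun i hi => (hI i hi).2.2⟩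

end SkewBrace
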